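/- Let D_n be the number of descents of a uniformly random permutation of S_n. Then (D_n − (n−1)/2) / sqrt((n+1)/12) converges in distribution, as n → ∞, to a standard normal random variable (i.e., the laws of these normalized random variables converge weakly to the standard Gaussian measure on ℝ). -/

import Mathlib

/-!
Let `U₁, …, Uₙ` be independent and uniform on `[0, 1)`, and let `Vₖ` be the fractional part of
`U₁ + ⋯ + Uₖ`. Adding `Uₖ₊₁` carries exactly when `Vₖ₊₁ < Vₖ`, so `⌊U₁ + ⋯ + Uₙ⌋` is the number of
descents of the word `V₁ ⋯ Vₙ`. On the torus `(ℝ / ℤ)ⁿ` the map `U ↦ V` is a surjective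
endomorphism, hence preserves Haar measure: `V` is again a vector of independent uniform variables,
and its descents are distributed like those of a uniform permutation. So the theorem is the central
limit theorem for `∑ Uₖ`, of mean `n / 2` and variance `n / 12`, up to a rounding error of at most
`1` and a change of scale, which Slutsky's theorem absorbs.
-/

open Finset Topology

/-- The value of `π` at (0-indexed) position `j`, or `0` if `j` is out of range. -/
def permVal {n : ℕ} (π : Equiv.Perm (Fin n)) (j : ℕ) : ℕ :=
  if h : j < n then (π ⟨j, h⟩ : ℕ) else 0

/-- The number of descents of a permutation of `n` elements: the number of positions
`i` (0-indexed, `i < n - 1`) with `π i > π (i+1)`. -/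
def des {n : ℕ} (π : Equiv.Perm (Fin n)) : ℕ :=
  ((Finset.range (n - 1)).filter (fun i => permVal π (i + 1) < permVal π i)).card

open MeasureTheory ProbabilityTheory Filter
open scoped BigOperators

section Descents

variable {α β : Type*} [LinearOrder α] [LinearOrder β] {n : ℕ}

/-- The number of descents of the word `w 0, …, w n`; the alphabet is an arbitrary linear order so
that words of random reals and permutations are treated alike. -/
def descents (w : Fin (n + 1) → α) : ℕ :=
  #{i : Fin n | w i.succ < w i.castSucc}

theorem descents_eq_sum (w : Fin (n + 1) → α) :
    descents w = ∑ i : Fin n, if w i.succ < w i.castSucc then 1 else 0 :=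
  card_filter _ _

theorem descents_le (w : Fin (n + 1) → α) : descents w ≤ n :=
  (card_le_univ _).trans_eq (Fintype.card_fin n)

theorem descents_tail (w : Fin (n + 2) → α) (h : w 0 ≤ w 1) :
    descents (Fin.tail w) = descents w := by
  have h' : ¬w (Fin.succ 0) < w (Fin.castSucc 0) := h.not_gt
  rw [descents_eq_sum w, Fin.sum_univ_succ, if_neg h', zero_add, descents_eq_sum]
  rfl

theorem descents_eq_descents_init_add (w : Fin (n + 2) → α) :
    descents w =
      descents (Fin.init w) + if w (Fin.last _) < w (Fin.last n).castSucc then 1 else 0 := by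
  rw [descents_eq_sum w, Fin.sum_univ_castSucc, descents_eq_sum]
  rfl

theorem descents_strictMono_comp {f : α → β} (hf : StrictMono f) (w : Fin (n + 1) → α) :
    descents (f ∘ w) = descents w := by
  simp [descents, hf.lt_iff_lt]

theorem des_eq_descents (π : Equiv.Perm (Fin (n + 1))) : des π = descents π := by
  rw [des, card_filter, descents_eq_sum, Nat.add_sub_cancel, ← Fin.sum_univ_eq_sum_range]
  refine Fintype.sum_congr _ _ fun i ↦ ?_
  rw [permVal, permVal, dif_pos (Nat.succ_lt_succ i.is_lt), dif_pos (Nat.lt_succ_of_lt i.is_lt)]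
  rfl

theorem expect_descents_comp_perm {E : Type*} [AddCommMonoid E] [Module ℚ≥0 E]
    {w : Fin (n + 1) → α} (hw : Function.Injective w) (g : ℕ → E) :
    𝔼 π : Equiv.Perm (Fin (n + 1)), g (descents (w ∘ π)) =
      𝔼 π : Equiv.Perm (Fin (n + 1)), g (descents π) := by
  have hsort : StrictMono (w ∘ Tuple.sort w) :=
    (Tuple.monotone_sort w).strictMono_of_injective (hw.comp (Tuple.sort w).injective)
  -- `w` is its increasing rearrangement read along a permutation, which the average absorbs.
  refine (Fintype.expect_equiv (Equiv.mulLeft (Tuple.sort w)) _ _ fun π ↦ ?_).symm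
  rw [← descents_strictMono_comp hsort]
  rfl

end Descents

section PartialSum

variable {M N : Type*} {n : ℕ}

theorem partialSum_last [AddCommMonoid M] (u : Fin n → M) :
    Fin.partialSum u (Fin.last n) = ∑ i, u i := by
  rw [Fin.partialSum, Fin.val_last, List.take_of_length_le (by simp), List.sum_ofFn]

theorem map_partialSum [AddMonoid M] [AddMonoid N] (f : M →+ N) (u : Fin n → M)
    (i : Fin (n + 1)) : f (Fin.partialSum u i) = Fin.partialSum (f ∘ u) i := by
  simp [Fin.partialSum, map_list_sum, List.map_take, List.map_ofFn]

theorem partialSum_add [AddCommMonoid M] (u v : Fin n → M) :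
    Fin.partialSum (u + v) = Fin.partialSum u + Fin.partialSum v := by
  ext i
  induction i using Fin.induction with
  | zero => simp
  | succ i ih =>
    simp only [Pi.add_apply, Fin.partialSum_succ] at ih ⊢
    rw [ih, add_add_add_comm]

theorem continuous_partialSum [TopologicalSpace M] [AddMonoid M] [ContinuousAdd M]
    (i : Fin (n + 1)) : Continuous fun u : Fin n → M ↦ Fin.partialSum u i := by
  induction i using Fin.induction with
  | zero => simpa using continuous_const
  | succ i ih =>
    simp only [Fin.partialSum_succ]
    fun_prop

variable (M n) in
/-- The shear `u ↦ (u 0, u 0 + u 1, …, u 0 + ⋯ + u (n - 1))`. -/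
def partialSumHom [AddCommGroup M] : (Fin n → M) →+ (Fin n → M) :=
  AddMonoidHom.mk' (fun u i ↦ Fin.partialSum u i.succ) fun u v ↦ by rw [partialSum_add]; rfl

theorem partialSumHom_apply [AddCommGroup M] (u : Fin n → M) (i : Fin n) :
    partialSumHom M n u i = Fin.partialSum u i.succ :=
  rfl

theorem partialSumHom_surjective [AddCommGroup M] : Function.Surjective (partialSumHom M n) := by
  intro v
  set w : Fin (n + 1) → M := Fin.cons 0 v with hw
  refine ⟨fun i ↦ -w i.castSucc + w i.succ, funext fun i ↦ ?_⟩
  simpa [hw, partialSumHom_apply] using congrFun (Fin.partialSum_left_neg w) i.succ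

theorem measurePreserving_partialSumHom [TopologicalSpace M] [AddCommGroup M]
    [IsTopologicalAddGroup M] [CompactSpace M] [SecondCountableTopology M]
    [MeasurableSpace M] [BorelSpace M] (μ : Measure M) [μ.IsAddHaarMeasure] :
    MeasurePreserving (partialSumHom M n) (Measure.pi fun _ ↦ μ) (Measure.pi fun _ ↦ μ) :=
  AddMonoidHom.measurePreserving (continuous_pi fun i ↦ continuous_partialSum i.succ)
    partialSumHom_surjective rfl

end PartialSum

section Floor

variable {R : Type*} [CommRing R] [LinearOrder R] [IsStrictOrderedRing R] [FloorRing R]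

theorem floor_add_eq_floor_add_ite (a : R) {u : R} (hu : u ∈ Set.Ico 0 1) :
    ⌊a + u⌋ = ⌊a⌋ + if Int.fract (a + u) < Int.fract a then 1 else 0 := by
  obtain ⟨hu₀, hu₁⟩ := hu
  have hle : ⌊a⌋ ≤ ⌊a + u⌋ := Int.floor_le_floor (by linarith)
  have hge : ⌊a + u⌋ ≤ ⌊a⌋ + 1 := by
    rw [← Int.floor_add_one]
    exact Int.floor_le_floor (by linarith)
  obtain h | h : ⌊a + u⌋ = ⌊a⌋ ∨ ⌊a + u⌋ = ⌊a⌋ + 1 := by lia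
  · rw [if_neg, h, add_zero]
    simp only [Int.fract, h]
    linarith
  · rw [if_pos, h]
    simp only [Int.fract, h]
    push_cast
    linarith

theorem floor_partialSum_last {n : ℕ} (u : Fin n → R) (hu : ∀ i, u i ∈ Set.Ico 0 1) :
    ⌊Fin.partialSum u (Fin.last n)⌋ = descents (fun i ↦ Int.fract (Fin.partialSum u i)) := by
  induction n with
  | zero => simp [descents]
  | succ n ih =>
    have hinit := ih (Fin.init u) fun i ↦ hu i.castSucc
    simp only [Fin.partialSum_init] at hinit
    rw [← Fin.succ_last, Fin.partialSum_succ, floor_add_eq_floor_add_ite _ (hu _), hinit,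
      descents_eq_descents_init_add, ← Fin.partialSum_succ]
    simp [Fin.init_def]

theorem floor_sum_eq_descents {n : ℕ} (u : Fin (n + 1) → R) (hu : ∀ i, u i ∈ Set.Ico 0 1) :
    ⌊∑ i, u i⌋ = descents (fun i ↦ Int.fract (Fin.partialSum u i.succ)) := by
  rw [← partialSum_last, floor_partialSum_last u hu, ← descents_tail]
  · rfl
  · simp

end Floor

section Torus

/-- The uniform distribution on `[0, 1)`, as a measure on `ℝ`. -/
noncomputable def uniform : Measure ℝ := volume.restrict (Set.Ico 0 1)

instance isProbabilityMeasure_uniform : IsProbabilityMeasure uniform :=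
  ⟨by simp [uniform]⟩

instance nullSingletonClass_uniform : NullSingletonClass uniform := by
  rw [uniform]; infer_instance

theorem ae_uniform_mem_Ico : ∀ᵐ x ∂uniform, x ∈ Set.Ico (0 : ℝ) 1 :=
  ae_restrict_mem measurableSet_Ico

theorem measurePreserving_coe_uniform :
    MeasurePreserving ((↑) : ℝ → UnitAddCircle) uniform volume := by
  simpa [uniform, Measure.restrict_congr_set Ico_ae_eq_Ioc] using
    UnitAddCircle.measurePreserving_mk 0

/-- The representative in `[0, 1)` of a point of the circle `ℝ / ℤ`. -/
noncomputable def unitRep (x : UnitAddCircle) : ℝ := AddCircle.equivIco 1 0 x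

theorem unitRep_coe (x : ℝ) : unitRep x = Int.fract x := by
  simp [unitRep, AddCircle.coe_equivIco_mk_apply]

theorem measurable_unitRep : Measurable unitRep :=
  measurable_subtype_coe.comp (AddCircle.measurableEquivIco 1 0).measurable

theorem measurePreserving_unitRep : MeasurePreserving unitRep volume uniform := by
  refine ⟨measurable_unitRep, ?_⟩
  have hid : unitRep ∘ ((↑) : ℝ → UnitAddCircle) =ᵐ[uniform] id := by
    filter_upwards [ae_uniform_mem_Ico] with x hx
    rw [Function.comp_apply, unitRep_coe, Int.fract_eq_self.2 hx, id]
  rw [← measurePreserving_coe_uniform.map_eq,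
    Measure.map_map measurable_unitRep measurePreserving_coe_uniform.measurable,
    Measure.map_congr hid, Measure.map_id]

theorem measurePreserving_fract_partialSum (n : ℕ) :
    MeasurePreserving (fun (u : Fin n → ℝ) (i : Fin n) ↦ Int.fract (Fin.partialSum u i.succ))
      (Measure.pi fun _ ↦ uniform) (Measure.pi fun _ ↦ uniform) := by
  have hlift := measurePreserving_pi (ι := Fin n) _ _ fun _ ↦ measurePreserving_unitRep
  have hproj := measurePreserving_pi (ι := Fin n) _ _ fun _ ↦ measurePreserving_coe_uniform
  have hcomp := (hlift.comp (measurePreserving_partialSumHom _)).comp hproj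
  have hfract (u : Fin n → ℝ) (i : Fin n) : Int.fract (Fin.partialSum u i.succ) =
      unitRep (partialSumHom UnitAddCircle n (fun j ↦ (u j : UnitAddCircle)) i) := by
    rw [← unitRep_coe]
    exact congrArg unitRep
      (map_partialSum (QuotientAddGroup.mk' (AddSubgroup.zmultiples (1 : ℝ))) u i.succ)
  simpa only [hfract, Function.comp_def] using hcomp

end Torus

section Exchangeable

theorem measurePreserving_comp_equiv {ι α : Type*} [Fintype ι] [MeasurableSpace α] (μ : Measure α)
    [SigmaFinite μ] (e : ι ≃ ι) :
    MeasurePreserving (fun w : ι → α ↦ w ∘ e) (Measure.pi fun _ ↦ μ) (Measure.pi fun _ ↦ μ) :=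
  measurePreserving_arrowCongr' (fun _ ↦ μ) (fun _ ↦ μ) e.symm (.refl α)
    fun _ ↦ MeasurePreserving.id μ

theorem prod_diagonal {α : Type*} [MeasurableSpace α] [MeasurableEq α] (μ ν : Measure α)
    [SFinite ν] [NullSingletonClass ν] : μ.prod ν (Set.diagonal α) = 0 := by
  rw [Measure.prod_apply measurableSet_diagonal]
  simp [Set.preimage, Set.diagonal]

theorem ae_ne_of_indepFun {Ω α : Type*} [MeasurableSpace Ω] [MeasurableSpace α] [MeasurableEq α]
    {P : Measure Ω} [IsFiniteMeasure P] {μ ν : Measure α} [SFinite ν] [NullSingletonClass ν]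
    {X Y : Ω → α} (hX : HasLaw X μ P) (hY : HasLaw Y ν P) (hXY : IndepFun X Y P) :
    ∀ᵐ ω ∂P, X ω ≠ Y ω := by
  have hdiag : ∀ᵐ p ∂μ.prod ν, p ∈ (Set.diagonal α)ᶜ :=
    measure_eq_zero_iff_ae_notMem.1 (prod_diagonal μ ν)
  exact ((hXY.hasLaw_prod hX hY).ae_iff measurableSet_diagonal.compl.mem).2 hdiag

theorem ae_injective_pi {ι α : Type*} [Fintype ι] [MeasurableSpace α] [MeasurableEq α]
    (μ : Measure α) [IsProbabilityMeasure μ] [NullSingletonClass μ] :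
    ∀ᵐ w ∂Measure.pi fun _ : ι ↦ μ, Function.Injective w := by
  have hne : ∀ i j : ι, i ≠ j → ∀ᵐ w ∂Measure.pi fun _ : ι ↦ μ, w i ≠ w j := fun i j hij ↦
    ae_ne_of_indepFun (measurePreserving_eval (fun _ ↦ μ) i).hasLaw
      (measurePreserving_eval (fun _ ↦ μ) j).hasLaw
      ((iIndepFun_pi (X := fun _ : ι ↦ id) fun _ ↦ aemeasurable_id).indepFun hij)
  simp only [← ae_all_iff] at hne
  filter_upwards [hne] with w hw i j
  exact not_imp_not.1 (hw i j)

theorem integrable_comp_of_le {Ω E : Type*} [MeasurableSpace Ω] {P : Measure Ω}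
    [IsFiniteMeasure P] [NormedAddCommGroup E] {X : Ω → ℕ} (hX : Measurable X) {N : ℕ}
    (hN : ∀ ω, X ω ≤ N) (g : ℕ → E) :
    Integrable (fun ω ↦ g (X ω)) P := by
  refine .of_bound (by fun_prop) (∑ k ∈ range (N + 1), ‖g k‖) (.of_forall fun ω ↦ ?_)
  exact single_le_sum (f := fun k ↦ ‖g k‖) (fun _ _ ↦ norm_nonneg _)
    (mem_range_succ_iff.2 (hN ω))

variable {α : Type*} [LinearOrder α] [TopologicalSpace α] [OrderClosedTopology α]
  [SecondCountableTopology α] [MeasurableSpace α] [OpensMeasurableSpace α] {n : ℕ}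

theorem measurable_descents : Measurable (descents : (Fin (n + 1) → α) → ℕ) := by
  simp only [funext descents_eq_sum]
  refine Finset.measurable_sum _ fun i _ ↦ Measurable.ite ?_ measurable_const measurable_const
  exact measurableSet_lt (measurable_pi_apply _) (measurable_pi_apply _)

theorem integral_descents_pi (μ : Measure α) [IsProbabilityMeasure μ] [NullSingletonClass μ]
    (g : ℕ → ℝ) :
    ∫ w, g (descents w) ∂(Measure.pi fun _ : Fin (n + 1) ↦ μ) =
      𝔼 π : Equiv.Perm (Fin (n + 1)), g (descents π) := by
  set ν := Measure.pi fun _ : Fin (n + 1) ↦ μ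
  have hint (π : Equiv.Perm (Fin (n + 1))) : Integrable (fun w ↦ g (descents (w ∘ π))) ν :=
    integrable_comp_of_le (measurable_descents.comp (measurePreserving_comp_equiv μ π).measurable)
      (fun _ ↦ descents_le _) g
  have hperm (π : Equiv.Perm (Fin (n + 1))) :
      ∫ w, g (descents (w ∘ π)) ∂ν = ∫ w, g (descents w) ∂ν :=
    (measurePreserving_comp_equiv μ π).hasLaw.integral_comp (f := fun w ↦ g (descents w))
      (Measurable.of_discrete.comp measurable_descents).aestronglyMeasurable
  have hinj : ∀ᵐ w ∂ν, Function.Injective w := ae_injective_pi μ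
  calc ∫ w, g (descents w) ∂ν
      = 𝔼 π : Equiv.Perm (Fin (n + 1)), ∫ w, g (descents (w ∘ π)) ∂ν := by
        simp only [hperm, Fintype.expect_const]
    _ = ∫ w, 𝔼 π : Equiv.Perm (Fin (n + 1)), g (descents (w ∘ π)) ∂ν := by
        simp only [Fintype.expect_eq_sum_div_card, integral_div,
          integral_finsetSum _ fun π _ ↦ hint π]
    _ = ∫ _, 𝔼 π : Equiv.Perm (Fin (n + 1)), g (descents π) ∂ν := by
        refine integral_congr_ae ?_
        filter_upwards [hinj] with w hw using expect_descents_comp_perm hw g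
    _ = 𝔼 π : Equiv.Perm (Fin (n + 1)), g (descents π) := by simp

end Exchangeable

theorem integral_floor_sum_uniform {Ω : Type*} [MeasurableSpace Ω] {P : Measure Ω} {n : ℕ}
    {U : Fin (n + 1) → Ω → ℝ} (hU : ∀ i, HasLaw (U i) uniform P) (hindep : iIndepFun U P)
    (g : ℤ → ℝ) :
    ∫ ω, g ⌊∑ i, U i ω⌋ ∂P = 𝔼 π : Equiv.Perm (Fin (n + 1)), g (descents π) := by
  have hlaw := (measurePreserving_fract_partialSum (n + 1)).comp_hasLaw (hindep.hasLaw_pi hU)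
  have hmeas : Measurable fun w : Fin (n + 1) → ℝ ↦ g (descents w) :=
    Measurable.of_discrete.comp (g := fun k : ℕ ↦ g k) measurable_descents
  have hmem : ∀ᵐ ω ∂P, ∀ i, U i ω ∈ Set.Ico (0 : ℝ) 1 :=
    ae_all_iff.2 fun i ↦ ((hU i).ae_iff measurableSet_Ico.mem).2 ae_uniform_mem_Ico
  rw [← integral_descents_pi uniform fun k ↦ g k, ← hlaw.integral_comp hmeas.aestronglyMeasurable]
  refine integral_congr_ae ?_
  filter_upwards [hmem] with ω hω using congrArg g (floor_sum_eq_descents (fun i ↦ U i ω) hω)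

section CLT

theorem integral_uniform (f : ℝ → ℝ) : ∫ x, f x ∂uniform = ∫ x in (0 : ℝ)..1, f x := by
  rw [uniform, integral_Ico_eq_integral_Ioc, intervalIntegral.integral_of_le zero_le_one]

/-- The affine map taking a uniform variable on `[0, 1)`, whose mean is `1 / 2` and variance
`1 / 12`, to one of mean `0` and variance `1`. -/
noncomputable def standardize (x : ℝ) : ℝ := √12 * (x - 1 / 2)

theorem integral_standardize : ∫ x, standardize x ∂uniform = 0 := by
  simp [integral_uniform, standardize]

theorem integral_standardize_sq : ∫ x, standardize x ^ 2 ∂uniform = 1 := by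
  simp only [integral_uniform, standardize, mul_pow]
  rw [intervalIntegral.integral_comp_sub_right (fun x ↦ √12 ^ 2 * x ^ 2)]
  norm_num [integral_pow]

theorem tendsto_integral_of_tendstoInDistribution {ι E Ω' : Type*} {Ω : ι → Type*}
    [∀ i, MeasurableSpace (Ω i)] [MeasurableSpace Ω'] {P : ∀ i, Measure (Ω i)} {Q : Measure Ω'}
    [∀ i, IsProbabilityMeasure (P i)] [IsProbabilityMeasure Q] [TopologicalSpace E]
    [MeasurableSpace E] [OpensMeasurableSpace E] {X : ∀ i, Ω i → E} {Z : Ω' → E} {l : Filter ι}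
    (h : TendstoInDistribution X l Z P Q) (f : BoundedContinuousFunction E ℝ) :
    Tendsto (fun i ↦ ∫ ω, f (X i ω) ∂P i) l (𝓝 (∫ ω, f (Z ω) ∂Q)) := by
  have hmap := ProbabilityMeasure.tendsto_iff_forall_integral_tendsto.1 h.tendsto f
  simpa only [ProbabilityMeasure.coe_mk, integral_map h.aemeasurable_limit
    f.continuous.measurable.aestronglyMeasurable, integral_map (h.forall_aemeasurable _)
    f.continuous.measurable.aestronglyMeasurable] using hmap

variable {Ω Ω' : Type*} [MeasurableSpace Ω] [MeasurableSpace Ω'] {P : Measure Ω} {Q : Measure Ω'}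
  [IsProbabilityMeasure P] [IsProbabilityMeasure Q]

theorem tendstoInDistribution_mul_add {X Y : ℕ → Ω → ℝ} {Z : Ω' → ℝ} {a : ℕ → ℝ} {α β : ℝ}
    (hX : TendstoInDistribution X atTop Z (fun _ ↦ P) Q) (ha : Tendsto a atTop (𝓝 α))
    (hY : TendstoInMeasure P Y atTop fun _ ↦ β) (hYm : ∀ n, AEMeasurable (Y n) P) :
    TendstoInDistribution (fun n ω ↦ a n * X n ω + Y n ω) atTop (fun ω ↦ α * Z ω + β)
      (fun _ ↦ P) Q := by
  have haX := hX.continuous_comp_prodMk_of_tendstoInMeasure_const (g := fun p : ℝ × ℝ ↦ p.2 * p.1)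
    (by fun_prop) (Y := fun n _ ↦ a n) (c := α)
    (tendstoInMeasure_of_tendsto_ae (by fun_prop) (.of_forall fun _ ↦ ha)) (by fun_prop)
  exact haX.add_of_tendstoInMeasure_const hY hYm

theorem tendstoInDistribution_sum_uniform {U : ℕ → Ω → ℝ} (hU : ∀ i, HasLaw (U i) uniform P)
    (hindep : iIndepFun U P) :
    TendstoInDistribution (fun (n : ℕ) ω ↦ (√n)⁻¹ * ∑ k ∈ range n, standardize (U k ω)) atTop id
      (fun _ ↦ P) (gaussianReal 0 1) := by
  have hmeas : Measurable standardize := by unfold standardize; fun_prop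
  refine tendstoInDistribution_inv_sqrt_mul_sum (X := fun k ω ↦ standardize (U k ω)) .id ?_ ?_ ?_ ?_
  · rw [← integral_standardize]
    exact (hU 0).integral_comp hmeas.aestronglyMeasurable
  · rw [← integral_standardize_sq]
    exact (hU 0).integral_comp (hmeas.pow_const 2).aestronglyMeasurable
  · exact hindep.comp (fun _ ↦ standardize) fun _ ↦ hmeas
  · exact fun i ↦ ((hU i).identDistrib (hU 0)).comp hmeas

/-- The affine map normalizing the number of descents of a uniform permutation of `n` letters,
whose mean is `(n - 1) / 2` and variance `(n + 1) / 12` (for `2 ≤ n`). -/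
noncomputable def normalizeDescents (n : ℕ) (x : ℝ) : ℝ :=
  (x - ((n : ℝ) - 1) / 2) / √(((n : ℝ) + 1) / 12)

theorem normalizeDescents_floor_sum (n : ℕ) (u : ℕ → ℝ) :
    normalizeDescents n ⌊∑ k ∈ range n, u k⌋ =
      √((n : ℝ) / (n + 1)) * ((√n)⁻¹ * ∑ k ∈ range n, standardize (u k)) +
        (1 / 2 - Int.fract (∑ k ∈ range n, u k)) / √(((n : ℝ) + 1) / 12) := by
  have hsum : ∑ k ∈ range n, standardize (u k) = √12 * (∑ k ∈ range n, u k - n / 2) := by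
    simp [standardize, ← mul_sum, sum_sub_distrib, div_eq_mul_inv]
  rw [hsum, normalizeDescents, ← Int.self_sub_fract, Real.sqrt_div n.cast_nonneg,
    Real.sqrt_div (by positivity : (0 : ℝ) ≤ n + 1)]
  obtain rfl | hn := n.eq_zero_or_pos
  · norm_num [div_eq_inv_mul]
  · field_simp
    ring

theorem tendsto_half_sub_fract_div (x : ℕ → ℝ) :
    Tendsto (fun n : ℕ ↦ (1 / 2 - Int.fract (x n)) / √(((n : ℝ) + 1) / 12)) atTop (𝓝 0) := by
  have hscale : Tendsto (fun n : ℕ ↦ √(((n : ℝ) + 1) / 12)) atTop atTop :=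
    Real.tendsto_sqrt_atTop.comp <| Tendsto.atTop_div_const (by norm_num) <|
      tendsto_atTop_add_const_right _ _ tendsto_natCast_atTop_atTop
  refine squeeze_zero_norm (fun n ↦ ?_) (tendsto_const_nhds (x := (1 : ℝ)).div_atTop hscale)
  rw [norm_div, Real.norm_of_nonneg (Real.sqrt_nonneg _)]
  gcongr
  rw [Real.norm_eq_abs, abs_le]
  constructor <;> linarith [Int.fract_nonneg (x n), Int.fract_lt_one (x n)]

theorem tendstoInDistribution_normalizeDescents_floor_sum {U : ℕ → Ω → ℝ}
    (hU : ∀ i, HasLaw (U i) uniform P) (hindep : iIndepFun U P) :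
    TendstoInDistribution (fun n ω ↦ normalizeDescents n ⌊∑ k ∈ range n, U k ω⌋) atTop id
      (fun _ ↦ P) (gaussianReal 0 1) := by
  have hscale : Tendsto (fun n : ℕ ↦ √((n : ℝ) / (n + 1))) atTop (𝓝 1) := by
    simpa using (tendsto_natCast_div_add_atTop (1 : ℝ)).sqrt
  have hmeas (n : ℕ) : AEMeasurable (fun ω ↦
      (1 / 2 - Int.fract (∑ k ∈ range n, U k ω)) / √(((n : ℝ) + 1) / 12)) P := by
    have hUm (i : ℕ) : AEMeasurable (U i) P := (hU i).aemeasurable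
    fun_prop
  have hround := tendstoInMeasure_of_tendsto_ae (fun n ↦ (hmeas n).aestronglyMeasurable)
    (.of_forall fun ω ↦ tendsto_half_sub_fract_div fun n ↦ ∑ k ∈ range n, U k ω)
  have hlim := tendstoInDistribution_mul_add (tendstoInDistribution_sum_uniform hU hindep) hscale
    hround hmeas
  simpa only [normalizeDescents_floor_sum, one_mul, add_zero] using hlim

end CLT

/-- The normalized number of descents of a uniformly random permutation converges in
distribution to a standard normal random variable: for every bounded continuous test
function, the expectations converge to the Gaussian integral. -/
theorem descents_clt (f : BoundedContinuousFunction ℝ ℝ) :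
    Filter.Tendsto
      (fun n : ℕ =>
        (∑ π : Equiv.Perm (Fin n),
            f (((des π : ℝ) - ((n : ℝ) - 1) / 2) / Real.sqrt (((n : ℝ) + 1) / 12)))
          / (Nat.factorial n : ℝ))
      Filter.atTop
      (𝓝 (∫ x, f x ∂(ProbabilityTheory.gaussianReal 0 1))) := by
  obtain ⟨Ω, _, P, U, -, hU, hindep, _⟩ := exists_iid ℕ uniform
  have hconv := tendsto_integral_of_tendstoInDistribution
    (tendstoInDistribution_normalizeDescents_floor_sum hU hindep) f
  refine hconv.congr' ?_
  filter_upwards [eventually_ge_atTop 1] with n hn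
  obtain ⟨m, rfl⟩ := Nat.exists_eq_add_of_le' hn
  calc ∫ ω, f (normalizeDescents (m + 1) ⌊∑ k ∈ range (m + 1), U k ω⌋) ∂P
      = ∫ ω, f (normalizeDescents (m + 1) ⌊∑ i : Fin (m + 1), U i ω⌋) ∂P := by
        simp only [Finset.sum_range]
    _ = 𝔼 π : Equiv.Perm (Fin (m + 1)), f (normalizeDescents (m + 1) (descents π)) :=
        integral_floor_sum_uniform (fun i ↦ hU i) (hindep.precomp Fin.val_injective)
          fun k ↦ f (normalizeDescents (m + 1) k)
    _ = _ := by
        simp only [Fintype.expect_eq_sum_div_card, Fintype.card_perm, Fintype.card_fin,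
          ← des_eq_descents, normalizeDescents]
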